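/- Let n ≥ 3 and let S be a finite-dimensional real normed vector space equipped with linear operators β_a (a = 1,…,n) satisfying β_a β_b + β_b β_a = −δ_{ab}·id_S. For smooth ψ : ℝⁿ → S define Dψ = Σ_a β_a(∂_a ψ) and (Tψ)_a = ∂_a ψ + (2/n) β_a(Dψ). Then for each index a, (2/n)·∂_a(Dψ) = (2/(n−2))·( D((Tψ)_a) − (1/(n−1))·β_a Σ_b ∂_b((Tψ)_b) ), where D applied to the S-valued map (Tψ)_a means Σ_b β_b ∂_b((Tψ)_a). (Flat-space form of identity (4.14), which establishes the commutativity d^∇ L₀ = L₁ T of Proposition 4.7.) -/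

import Mathlib

noncomputable section

/-- Points of `ℝⁿ`. -/
abbrev Vec (n : ℕ) := Fin n → ℝ

/-- Partial derivative `∂_a f` in the `a`-th coordinate direction. -/
def pd {n : ℕ} {S : Type*} [NormedAddCommGroup S] [NormedSpace ℝ S]
    (a : Fin n) (f : Vec n → S) (x : Vec n) : S :=
  fderiv ℝ f x (Pi.single a 1)

/-- The Dirac operator `Dψ = Σ_a β_a (∂_a ψ)` on `S`-valued maps. -/
def dirac {n : ℕ} {S : Type*} [NormedAddCommGroup S] [NormedSpace ℝ S]
    (β : Fin n → S →ₗ[ℝ] S) (ψ : Vec n → S) (x : Vec n) : S :=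
  ∑ a, β a (pd a ψ x)

/-!
Everything is expressed through `∂_a(Dψ)` and `β_a(D²ψ)`. The Clifford relations give
`D(β_a φ) = -∂_a φ - β_a(Dφ)` and, by symmetry of second derivatives, `Δψ = -2 D²ψ`. Hence
`D((Tψ)_a) = (1 - 2/n) ∂_a(Dψ) - (2/n) β_a(D²ψ)` and `Σ_b ∂_b((Tψ)_b) = (2/n - 2) D²ψ`, and
dividing the latter by `n - 1` makes the two `β_a(D²ψ)` terms cancel.
-/

/-- Clifford relations for a family of endomorphisms, normalised so that `2 (β a)² = -1`: over `ℝ`,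
this is Clifford multiplication by an orthonormal frame, rescaled by `1/√2`. -/
def IsCliffordFamily {ι R S : Type*} [DecidableEq ι] [Semiring R] [AddCommGroup S] [Module R S]
    (β : ι → S →ₗ[R] S) : Prop :=
  ∀ a b, β a ∘ₗ β b + β b ∘ₗ β a = if a = b then -LinearMap.id else 0

namespace IsCliffordFamily

variable {ι R S : Type*} [DecidableEq ι] [Semiring R] [AddCommGroup S] [Module R S]
  {β : ι → S →ₗ[R] S}

theorem apply_apply_add (hβ : IsCliffordFamily β) (a b : ι) (v : S) :
    β a (β b v) + β b (β a v) = if a = b then -v else 0 := by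
  have h := LinearMap.congr_fun (hβ a b) v
  split_ifs at h ⊢ <;> simpa using h

theorem sum_apply_apply [Fintype ι] (hβ : IsCliffordFamily β) (a : ι) (v : ι → S) :
    ∑ b, β b (β a (v b)) = -v a - β a (∑ b, β b (v b)) := by
  rw [map_sum, eq_sub_iff_add_eq, ← Finset.sum_add_distrib]
  simp [hβ.apply_apply_add]

theorem two_nsmul_sum_sum_apply_apply [Fintype ι] (hβ : IsCliffordFamily β) {H : ι → ι → S}
    (hH : ∀ b c, H b c = H c b) :
    2 • ∑ b, ∑ c, β b (β c (H b c)) = -∑ b, H b b := by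
  have hswap : ∑ b, ∑ c, β b (β c (H b c)) = ∑ b, ∑ c, β c (β b (H b c)) := by
    rw [Finset.sum_comm]
    simp only [hH]
  calc 2 • ∑ b, ∑ c, β b (β c (H b c))
      = ∑ b, ∑ c, (β b (β c (H b c)) + β c (β b (H b c))) := by
        rw [two_nsmul]
        nth_rewrite 2 [hswap]
        simp only [Finset.sum_add_distrib]
    _ = -∑ b, H b b := by simp [hβ.apply_apply_add]

end IsCliffordFamily

section Differentiability

variable {𝕜 E F G : Type*} [NontriviallyNormedField 𝕜] [NormedAddCommGroup E] [NormedSpace 𝕜 E]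
  [NormedAddCommGroup F] [NormedSpace 𝕜 F] [NormedAddCommGroup G] [NormedSpace 𝕜 G]
  {f : E → F} {x : E}

theorem differentiableAt_linearMap_comp {L : F →ₗ[𝕜] G} (hL : Continuous L)
    (hf : DifferentiableAt 𝕜 f x) : DifferentiableAt 𝕜 (fun y => L (f y)) x :=
  (ContinuousLinearMap.mk L hL).differentiableAt.comp x hf

theorem differentiableAt_fderiv_of_contDiffAt_two (hf : ContDiffAt 𝕜 2 f x) :
    DifferentiableAt 𝕜 (fderiv 𝕜 f) x :=
  (hf.fderiv_right (m := 1) (by norm_num)).differentiableAt (by norm_num)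

end Differentiability

section PartialDerivative

variable {n : ℕ} {S S' : Type*} [NormedAddCommGroup S] [NormedSpace ℝ S]
  [NormedAddCommGroup S'] [NormedSpace ℝ S'] {f g : Vec n → S} {x : Vec n}

theorem pd_add (hf : DifferentiableAt ℝ f x) (hg : DifferentiableAt ℝ g x) (a : Fin n) :
    pd a (fun y => f y + g y) x = pd a f x + pd a g x := by
  simp only [pd, fderiv_fun_add hf hg, add_apply]

theorem pd_sum {ι : Type*} {s : Finset ι} {F : ι → Vec n → S}
    (hF : ∀ i ∈ s, DifferentiableAt ℝ (F i) x) (a : Fin n) :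
    pd a (fun y => ∑ i ∈ s, F i y) x = ∑ i ∈ s, pd a (F i) x := by
  simp only [pd, fderiv_fun_sum hF, sum_apply]

theorem pd_const_smul (hf : DifferentiableAt ℝ f x) (r : ℝ) (a : Fin n) :
    pd a (fun y => r • f y) x = r • pd a f x := by
  simp only [pd, fderiv_fun_const_smul hf, smul_apply]

theorem pd_linearMap_comp {L : S →ₗ[ℝ] S'} (hL : Continuous L) (hf : DifferentiableAt ℝ f x)
    (a : Fin n) : pd a (fun y => L (f y)) x = L (pd a f x) :=
  congrArg (· (Pi.single a 1))
    ((ContinuousLinearMap.mk L hL).hasFDerivAt.comp x hf.hasFDerivAt).fderiv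

theorem differentiableAt_pd (hf : DifferentiableAt ℝ (fderiv ℝ f) x) (a : Fin n) :
    DifferentiableAt ℝ (pd a f) x :=
  hf.clm_apply (differentiableAt_const _)

theorem pd_pd (hf : DifferentiableAt ℝ (fderiv ℝ f) x) (a b : Fin n) :
    pd a (pd b f) x = fderiv ℝ (fderiv ℝ f) x (Pi.single a 1) (Pi.single b 1) := by
  have h := hf.hasFDerivAt.clm_apply (hasFDerivAt_const (Pi.single b (1 : ℝ) : Vec n) x)
  unfold pd
  simp [h.fderiv]

theorem pd_comm (hf : ContDiffAt ℝ 2 f x) (a b : Fin n) :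
    pd a (pd b f) x = pd b (pd a f) x := by
  have hf' := differentiableAt_fderiv_of_contDiffAt_two hf
  rw [pd_pd hf', pd_pd hf']
  exact hf.isSymmSndFDerivAt (by simp) _ _

end PartialDerivative

/-- The twistor operator `(Tψ)_a = ∂_a ψ + (2/n) β_a(Dψ)`, the projection of the gradient of `ψ`
onto the kernel of Clifford multiplication `(v_a) ↦ Σ_a β_a v_a`. -/
def twistor {n : ℕ} {S : Type*} [NormedAddCommGroup S] [NormedSpace ℝ S]
    (β : Fin n → S →ₗ[ℝ] S) (ψ : Vec n → S) (a : Fin n) (x : Vec n) : S :=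
  pd a ψ x + ((2 : ℝ) / n) • β a (dirac β ψ x)

section Dirac

variable {n : ℕ} {S : Type*} [NormedAddCommGroup S] [NormedSpace ℝ S]
  {β : Fin n → S →ₗ[ℝ] S} {φ ψ : Vec n → S} {x : Vec n}

theorem differentiableAt_dirac (hβc : ∀ a, Continuous (β a))
    (hψ : DifferentiableAt ℝ (fderiv ℝ ψ) x) : DifferentiableAt ℝ (dirac β ψ) x :=
  DifferentiableAt.fun_sum fun c _ =>
    differentiableAt_linearMap_comp (hβc c) (differentiableAt_pd hψ c)

theorem pd_dirac (hβc : ∀ a, Continuous (β a)) (hψ : DifferentiableAt ℝ (fderiv ℝ ψ) x)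
    (a : Fin n) : pd a (dirac β ψ) x = ∑ c, β c (pd a (pd c ψ) x) := by
  have hpd := differentiableAt_pd hψ
  calc pd a (dirac β ψ) x
      = ∑ c, pd a (fun y => β c (pd c ψ y)) x :=
        pd_sum (fun c _ => differentiableAt_linearMap_comp (hβc c) (hpd c)) a
    _ = ∑ c, β c (pd a (pd c ψ) x) := by simp only [pd_linearMap_comp (hβc _) (hpd _)]

theorem dirac_pd (hβc : ∀ a, Continuous (β a)) (hψ : ContDiffAt ℝ 2 ψ x) (a : Fin n) :
    dirac β (pd a ψ) x = pd a (dirac β ψ) x := by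
  rw [pd_dirac hβc (differentiableAt_fderiv_of_contDiffAt_two hψ)]
  simp only [dirac, pd_comm hψ a]

theorem dirac_clifford_apply (hβ : IsCliffordFamily β) {a : Fin n} (hβc : Continuous (β a))
    (hφ : DifferentiableAt ℝ φ x) :
    dirac β (fun y => β a (φ y)) x = -pd a φ x - β a (dirac β φ x) := by
  simp only [dirac, pd_linearMap_comp hβc hφ, hβ.sum_apply_apply]

theorem sum_pd_pd_eq_neg_two_smul_dirac_dirac (hβ : IsCliffordFamily β)
    (hβc : ∀ a, Continuous (β a)) (hψ : ContDiffAt ℝ 2 ψ x) :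
    ∑ b, pd b (pd b ψ) x = (-2 : ℝ) • dirac β (dirac β ψ) x := by
  have hsum : dirac β (dirac β ψ) x = ∑ b, ∑ c, β b (β c (pd b (pd c ψ) x)) := by
    simp only [dirac.eq_def β (dirac β ψ),
      pd_dirac hβc (differentiableAt_fderiv_of_contDiffAt_two hψ), map_sum]
  rw [neg_smul, ofNat_smul_eq_nsmul, hsum, hβ.two_nsmul_sum_sum_apply_apply (pd_comm hψ), neg_neg]

theorem pd_twistor (hβc : ∀ a, Continuous (β a)) (hψ : DifferentiableAt ℝ (fderiv ℝ ψ) x)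
    (a b : Fin n) :
    pd b (twistor β ψ a) x
      = pd b (pd a ψ) x + ((2 : ℝ) / n) • pd b (fun y => β a (dirac β ψ y)) x := by
  have hβD := differentiableAt_linearMap_comp (hβc a) (differentiableAt_dirac hβc hψ)
  rw [← pd_const_smul hβD]
  exact pd_add (differentiableAt_pd hψ a) (hβD.const_smul _) b

theorem dirac_twistor (hβ : IsCliffordFamily β) (hβc : ∀ a, Continuous (β a))
    (hψ : ContDiffAt ℝ 2 ψ x) (a : Fin n) :
    dirac β (twistor β ψ a) x
      = (1 - (2 : ℝ) / n) • pd a (dirac β ψ) x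
        - ((2 : ℝ) / n) • β a (dirac β (dirac β ψ) x) := by
  have hψ' := differentiableAt_fderiv_of_contDiffAt_two hψ
  calc dirac β (twistor β ψ a) x
      = dirac β (pd a ψ) x + ((2 : ℝ) / n) • dirac β (fun y => β a (dirac β ψ y)) x := by
        simp only [dirac.eq_def β (twistor β ψ a), pd_twistor hβc hψ', map_add, map_smul,
          Finset.sum_add_distrib, ← Finset.smul_sum, ← dirac.eq_def]
    _ = pd a (dirac β ψ) x
          + ((2 : ℝ) / n) • (-pd a (dirac β ψ) x - β a (dirac β (dirac β ψ) x)) := by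
        rw [dirac_pd hβc hψ, dirac_clifford_apply hβ (hβc a) (differentiableAt_dirac hβc hψ')]
    _ = _ := by module

theorem sum_pd_twistor (hβ : IsCliffordFamily β) (hβc : ∀ a, Continuous (β a))
    (hψ : ContDiffAt ℝ 2 ψ x) :
    ∑ b, pd b (twistor β ψ b) x = ((2 : ℝ) / n - 2) • dirac β (dirac β ψ) x := by
  have hψ' := differentiableAt_fderiv_of_contDiffAt_two hψ
  calc ∑ b, pd b (twistor β ψ b) x
      = ∑ b, pd b (pd b ψ) x + ((2 : ℝ) / n) • dirac β (dirac β ψ) x := by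
        simp only [pd_twistor hβc hψ', pd_linearMap_comp (hβc _) (differentiableAt_dirac hβc hψ'),
          Finset.sum_add_distrib, ← Finset.smul_sum, ← dirac.eq_def]
    _ = _ := by
        rw [sum_pd_pd_eq_neg_two_smul_dirac_dirac hβ hβc hψ]
        module

theorem twistor_splitting_commutativity_general (hn : 3 ≤ n) (hβ : IsCliffordFamily β)
    (hβc : ∀ a, Continuous (β a)) (hψ : ContDiffAt ℝ 2 ψ x) (a : Fin n) :
    ((2 : ℝ) / n) • pd a (dirac β ψ) x
      = ((2 : ℝ) / ((n : ℝ) - 2)) •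
          (dirac β (twistor β ψ a) x
            - ((1 : ℝ) / ((n : ℝ) - 1)) • β a (∑ b, pd b (twistor β ψ b) x)) := by
  have hn' : (3 : ℝ) ≤ n := by exact_mod_cast hn
  have hn0 : (n : ℝ) ≠ 0 := by linarith
  have hn1 : (n : ℝ) - 1 ≠ 0 := by linarith
  have hn2 : (n : ℝ) - 2 ≠ 0 := by linarith
  rw [dirac_twistor hβ hβc hψ, sum_pd_twistor hβ hβc hψ, map_smul]
  match_scalars <;> field_simp
  ring

end Dirac

/-- Flat-space form of identity (4.14), establishing the commutativity
`d^∇ L₀ = L₁ T` of Proposition 4.7: for the twistor operator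
`(Tψ)_a = ∂_a ψ + (2/n) β_a(Dψ)`, one has
`(2/n) ∂_a(Dψ) = (2/(n−2)) ( D((Tψ)_a) − (1/(n−1)) β_a Σ_b ∂_b((Tψ)_b) )`. -/
theorem twistor_splitting_commutativity (n : ℕ) (hn : 3 ≤ n)
    {S : Type*} [NormedAddCommGroup S] [NormedSpace ℝ S] [FiniteDimensional ℝ S]
    (β : Fin n → S →ₗ[ℝ] S)
    (hβ : ∀ a b, (β a) ∘ₗ (β b) + (β b) ∘ₗ (β a)
      = if a = b then -(LinearMap.id : S →ₗ[ℝ] S) else 0)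
    (ψ : Vec n → S) (hψ : ContDiff ℝ (⊤ : ℕ∞) ψ)
    (Tψ : Fin n → Vec n → S)
    (hT : ∀ (a : Fin n) (y : Vec n),
      Tψ a y = pd a ψ y + ((2 : ℝ) / n) • β a (dirac β ψ y))
    (a : Fin n) (x : Vec n) :
    ((2 : ℝ) / n) • pd a (dirac β ψ) x
      = ((2 : ℝ) / ((n : ℝ) - 2)) •
          ((∑ b, β b (pd b (Tψ a) x))
            - ((1 : ℝ) / ((n : ℝ) - 1)) • β a (∑ b, pd b (Tψ b) x)) := by
  obtain rfl : Tψ = twistor β ψ := funext₂ hT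
  exact twistor_splitting_commutativity_general hn hβ
    (fun c => (β c).continuous_of_finiteDimensional) (contDiff_infty.1 hψ 2).contDiffAt a
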